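/- Fix an integer k ≥ 0. Let X be a finite clique complex such that every strongly connected, pure (k+1)-dimensional subcomplex S ⊆ X contains at least one vertex v with deg_S(v) ≤ 2k+1. Then X is (k+1)-collapsible. -/

import Mathlib

open Finset

/-! Basic definitions for finite abstract simplicial complexes, viewed as
downward-closed families of nonempty finite sets of vertices. -/

variable {V : Type*} [DecidableEq V]

/-- `K` is an abstract simplicial complex: every face is nonempty, and `K` is
closed under taking nonempty subsets. -/
def IsComplex (K : Set (Finset V)) : Prop :=
  (∀ σ ∈ K, σ.Nonempty) ∧ ∀ σ ∈ K, ∀ τ : Finset V, τ ⊆ σ → τ.Nonempty → τ ∈ K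

/-- `τ` is a maximal face (facet) of `K`. -/
def IsMaximalFace (K : Set (Finset V)) (τ : Finset V) : Prop :=
  τ ∈ K ∧ ∀ η ∈ K, τ ⊆ η → η = τ

/-- `σ` is a free face of the maximal face `τ` in `K`: `σ ⊊ τ`, `τ` is maximal,
and `τ` is the only maximal face of `K` containing `σ`. -/
def IsFreeFace (K : Set (Finset V)) (σ τ : Finset V) : Prop :=
  σ ∈ K ∧ IsMaximalFace K τ ∧ σ ⊂ τ ∧
    ∀ η : Finset V, IsMaximalFace K η → σ ⊆ η → η = τ

/-- One simplicial collapse: remove all faces `η` with `σ ⊆ η ⊆ τ`, where `σ` is a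
free face of `τ`. -/
def CollapseStep (K K' : Set (Finset V)) : Prop :=
  ∃ σ τ : Finset V, IsFreeFace K σ τ ∧ K' = K \ {η | σ ⊆ η ∧ η ⊆ τ}

/-- `K` collapses to `K'` by a finite sequence of simplicial collapses. -/
def CollapsesTo (K K' : Set (Finset V)) : Prop :=
  Relation.ReflTransGen CollapseStep K K'

/-- `K` is `k`-collapsible: it collapses to a complex of dimension at most `k - 1`,
i.e. in which every face has at most `k` vertices. -/
def Collapsible (k : ℕ) (K : Set (Finset V)) : Prop :=
  ∃ K' : Set (Finset V), CollapsesTo K K' ∧ ∀ σ ∈ K', σ.card ≤ k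

/-- `K` is a clique (flag) complex: it is a simplicial complex, and any nonempty
finite vertex set whose 1-skeleton (vertices and edges) lies in `K` is a face of `K`. -/
def IsCliqueComplex (K : Set (Finset V)) : Prop :=
  IsComplex K ∧ ∀ σ : Finset V, σ.Nonempty →
    (∀ τ : Finset V, τ ⊆ σ → τ.Nonempty → τ.card ≤ 2 → τ ∈ K) → σ ∈ K

/-- The flag closure of `S`: add every simplex whose 1-skeleton lies in `S`;
equivalently, the clique complex of the 1-skeleton of `S`. -/
def flagClosure (S : Set (Finset V)) : Set (Finset V) :=
  S ∪ {σ : Finset V | σ.Nonempty ∧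
    ∀ τ : Finset V, τ ⊆ σ → τ.Nonempty → τ.card ≤ 2 → τ ∈ S}

/-- `S` is pure `d`-dimensional: it is nonempty and all its maximal faces have
dimension `d` (i.e. `d + 1` vertices). -/
def IsPure (S : Set (Finset V)) (d : ℕ) : Prop :=
  S.Nonempty ∧ ∀ τ : Finset V, IsMaximalFace S τ → τ.card = d + 1

/-- Two `d`-dimensional faces of `S` are adjacent if they share a `(d-1)`-dimensional face. -/
def FacetAdj (S : Set (Finset V)) (d : ℕ) (σ τ : Finset V) : Prop :=
  σ ∈ S ∧ τ ∈ S ∧ σ.card = d + 1 ∧ τ.card = d + 1 ∧ (σ ∩ τ).card = d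

/-- A pure `d`-dimensional complex is strongly connected if any two `d`-faces are
joined by a chain of `d`-faces in which consecutive faces share a `(d-1)`-face. -/
def StronglyConnected (S : Set (Finset V)) (d : ℕ) : Prop :=
  ∀ σ ∈ S, ∀ τ ∈ S, σ.card = d + 1 → τ.card = d + 1 →
    Relation.ReflTransGen (FacetAdj S d) σ τ

/-- A relevant `d`-subcomplex of `X`: a subcomplex that is pure `d`-dimensional
and strongly connected. -/
def IsRelevant (X S : Set (Finset V)) (d : ℕ) : Prop :=
  S ⊆ X ∧ IsComplex S ∧ IsPure S d ∧ StronglyConnected S d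

/-- A maximal relevant `d`-subcomplex of `X`: a relevant `d`-subcomplex not properly
contained in any other relevant `d`-subcomplex of `X`. -/
def IsMaxRelevant (X S : Set (Finset V)) (d : ℕ) : Prop :=
  IsRelevant X S d ∧ ∀ T : Set (Finset V), IsRelevant X T d → S ⊆ T → T = S

/-- The degree of a vertex `v` in `S`: the number of vertices adjacent to `v`
in the 1-skeleton of `S`. -/
noncomputable def degreeIn (S : Set (Finset V)) (v : V) : ℕ :=
  {w : V | w ≠ v ∧ ({v, w} : Finset V) ∈ S}.ncard

/-- The link of a vertex `v` in `K`. -/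
def link (K : Set (Finset V)) (v : V) : Set (Finset V) :=
  {σ : Finset V | σ ∈ K ∧ v ∉ σ ∧ insert v σ ∈ K}

/-- The star of a face `σ` in `K`. -/
def star (K : Set (Finset V)) (σ : Finset V) : Set (Finset V) :=
  {τ ∈ K | σ ⊆ τ}

/-- The vertex support of `S`. -/
def vsupp (S : Set (Finset V)) : Set V := {v : V | ∃ σ ∈ S, v ∈ σ}

/-! ### Restricted collapses of arbitrary families -/

def FStep (k : ℕ) (A A' : Set (Finset V)) : Prop :=
  ∃ σ ∈ A, ∃ τ ∈ A, σ ⊂ τ ∧ k ≤ σ.card ∧ (∀ η ∈ A, σ ⊆ η → η ⊆ τ) ∧ A' = A \ {η | σ ⊆ η}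

def Clear (k : ℕ) (A : Set (Finset V)) : Prop :=
  ∃ A', Relation.ReflTransGen (FStep k) A A' ∧ ∀ σ ∈ A', σ.card ≤ k

theorem Clear.base {k : ℕ} {A : Set (Finset V)} (h : ∀ σ ∈ A, σ.card ≤ k) : Clear k A :=
  ⟨A, Relation.ReflTransGen.refl, h⟩

theorem Clear.step {k : ℕ} {A A' : Set (Finset V)} (h : FStep k A A') (h' : Clear k A') :
    Clear k A := by
  obtain ⟨B, hB, hc⟩ := h'
  exact ⟨B, Relation.ReflTransGen.head h hB, hc⟩

theorem steps_subset {k : ℕ} {A A' : Set (Finset V)}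
    (h : Relation.ReflTransGen (FStep k) A A') : A' ⊆ A := by
  induction h with
  | refl => exact subset_rfl
  | tail _ hs ih =>
    obtain ⟨σ, _, τ, _, _, _, _, rfl⟩ := hs
    exact Set.diff_subset.trans ih

theorem steps_local {k : ℕ} {A A' : Set (Finset V)}
    (h : Relation.ReflTransGen (FStep k) A A') :
    ∀ D : Set (Finset V), (∀ η ∈ D, ∀ σ ∈ A, k ≤ σ.card → ¬ σ ⊆ η) →
      Relation.ReflTransGen (FStep k) (D ∪ A) (D ∪ A') := by
  intro D hD
  induction h with
  | refl => exact Relation.ReflTransGen.refl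
  | @tail B B' hB hs ih =>
    refine ih.tail ?_
    have hBA := steps_subset hB
    obtain ⟨σ, hσ, τ, hτ, hlt, hk, hfree, rfl⟩ := hs
    refine ⟨σ, Or.inr hσ, τ, Or.inr hτ, hlt, hk, ?_, ?_⟩
    · rintro η (hη | hη) hs
      · exact absurd hs (hD η hη σ (hBA hσ) hk)
      · exact hfree η hη hs
    · ext η
      simp only [Set.mem_union, Set.mem_diff, Set.mem_setOf_eq]
      constructor
      · rintro (h | h)
        · exact ⟨Or.inl h, hD η h σ (hBA hσ) hk⟩
        · exact ⟨Or.inr h.1, h.2⟩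
      · rintro ⟨h | h, h'⟩
        · exact Or.inl h
        · exact Or.inr ⟨h, h'⟩

theorem Clear.glue {k : ℕ} {A B : Set (Finset V)} (hAB : A ⊆ B)
    (hup : ∀ η ∈ B, ∀ σ ∈ A, k ≤ σ.card → σ ⊆ η → η ∈ A)
    (hA : Clear k A) (hB : Clear k (B \ A)) : Clear k B := by
  obtain ⟨A', hA', hcA⟩ := hA
  obtain ⟨D', hD', hcD⟩ := hB
  have h1 := steps_local hA' (B \ A) (fun η hη σ hσ hk hs => hη.2 (hup η hη.1 σ hσ hk hs))
  have h2 := steps_local hD' A' (fun η hη σ hσ hk hs => by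
    have := Finset.eq_of_subset_of_card_le hs ((hcA η hη).trans hk)
    subst this
    exact hσ.2 (steps_subset hA' hη))
  rw [Set.diff_union_of_subset hAB] at h1
  rw [Set.union_comm] at h2
  refine ⟨_, h1.trans h2, ?_⟩
  rintro σ (h | h)
  · exact hcA σ h
  · exact hcD σ h

theorem Clear.extend {k : ℕ} {A B : Set (Finset V)} (hAB : A ⊆ B)
    (hs : ∀ η ∈ B, η ∉ A → η.card ≤ k) (hA : Clear k A) : Clear k B := by
  refine Clear.glue hAB ?_ hA (Clear.base fun σ hσ => hs σ hσ.1 hσ.2)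
  intro η hη σ hσ hk hsub
  by_contra hn
  have := Finset.eq_of_subset_of_card_le hsub ((hs η hη hn).trans hk)
  subst this
  exact hn hσ

theorem Clear.shift {k : ℕ} {A : Set (Finset V)} {u : V} (hu : ∀ σ ∈ A, u ∉ σ)
    (hA : Clear k A) : Clear (k + 1) ((fun σ => insert u σ) '' A) := by
  obtain ⟨A', hA', hc⟩ := hA
  have key : Relation.ReflTransGen (FStep (k + 1)) ((fun σ => insert u σ) '' A)
      ((fun σ => insert u σ) '' A') := by
    clear hc
    induction hA' with
    | refl => exact Relation.ReflTransGen.refl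
    | @tail B B' hB hs ih =>
      refine ih.tail ?_
      have hBA := steps_subset hB
      obtain ⟨σ, hσ, τ, hτ, hlt, hk, hfree, rfl⟩ := hs
      have huσ := hu σ (hBA hσ)
      have huτ := hu τ (hBA hτ)
      have hins : ∀ η ∈ B, insert u σ ⊆ insert u η ↔ σ ⊆ η := by
        intro η hη
        exact Finset.insert_subset_insert_iff huσ
      refine ⟨insert u σ, ⟨σ, hσ, rfl⟩, insert u τ, ⟨τ, hτ, rfl⟩, ?_, ?_, ?_, ?_⟩
      · refine ⟨(hins τ hτ).2 hlt.1, fun h => hlt.2 ?_⟩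
        exact (Finset.insert_subset_insert_iff huτ).1 h
      · rw [Finset.card_insert_of_notMem huσ]; omega
      · rintro _ ⟨η, hη, rfl⟩ hs
        exact Finset.insert_subset_insert _ (hfree η hη ((hins η hη).1 hs))
      · ext η
        constructor
        · rintro ⟨η, hη, rfl⟩
          exact ⟨⟨η, hη.1, rfl⟩, fun h => hη.2 ((hins η hη.1).1 h)⟩
        · rintro ⟨⟨η, hη, rfl⟩, hn⟩
          exact ⟨η, ⟨hη, fun h => hn ((hins η hη).2 h)⟩, rfl⟩
  refine ⟨_, key, ?_⟩
  rintro _ ⟨σ, hσ, rfl⟩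
  have h1 := hc σ hσ
  have h2 := Finset.card_insert_le u σ
  show (insert u σ).card ≤ k + 1
  omega

theorem Clear.restrict {k : ℕ} {A M : Set (Finset V)} (hMA : M ⊆ A)
    (hM : ∀ σ ∈ A, ∀ τ ∈ A, σ ⊂ τ → k ≤ σ.card → (σ ∈ M ↔ τ ∈ M))
    (hA : Clear k A) : Clear k M := by
  obtain ⟨A', hA', hc⟩ := hA
  have key : Relation.ReflTransGen (FStep k) M (M ∩ A') := by
    clear hc
    induction hA' with
    | refl => rw [Set.inter_eq_left.2 hMA]
    | @tail B B' hB hs ih =>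
      have hBA := steps_subset hB
      obtain ⟨σ, hσ, τ, hτ, hlt, hk, hfree, rfl⟩ := hs
      by_cases hσM : σ ∈ M
      · refine ih.tail ⟨σ, ⟨hσM, hσ⟩, τ, ⟨?_, hτ⟩, hlt, hk, fun η hη => hfree η hη.2, ?_⟩
        · exact (hM σ (hBA hσ) τ (hBA hτ) hlt hk).1 hσM
        · rw [Set.inter_diff_assoc]
      · convert ih using 1
        ext η
        simp only [Set.mem_inter_iff, Set.mem_diff, Set.mem_setOf_eq]
        constructor
        · rintro ⟨h1, h2, _⟩; exact ⟨h1, h2⟩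
        · rintro ⟨h1, h2⟩
          refine ⟨h1, h2, fun hs => hσM ?_⟩
          rcases eq_or_ne σ η with rfl | hne
          · exact h1
          · exact (hM σ (hBA hσ) η (hBA h2) (hs.ssubset_of_ne hne) hk).2 h1
  exact ⟨_, key, fun σ hσ => hc σ hσ.2⟩

/-- Families matched by toggling `u` can be cleared. -/
theorem Clear.cone (k : ℕ) (u : V) (n : ℕ) : ∀ A : Finset (Finset V), A.card ≤ n →
    (∀ σ, u ∉ σ → (σ ∈ A ↔ insert u σ ∈ A)) → Clear k (A : Set (Finset V)) := by
  induction n with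
  | zero =>
    intro A hA _
    have : A = ∅ := by simpa using hA
    subst this
    exact Clear.base (by simp)
  | succ n ih =>
    intro A hA hsym
    by_cases hne : (A.filter fun σ => u ∉ σ ∧ k ≤ σ.card).Nonempty
    · obtain ⟨σ, hσ, hmax⟩ := Finset.exists_max_image _ Finset.card hne
      simp only [Finset.mem_filter] at hσ hmax
      obtain ⟨hσA, huσ, hk⟩ := hσ
      have hcof : ∀ η ∈ A, σ ⊆ η → u ∉ η → η = σ := by
        intro η hη hs hu
        exact (Finset.eq_of_subset_of_card_le hs
          (hmax η ⟨hη, hu, hk.trans (Finset.card_le_card hs)⟩)).symm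
      have hcof2 : ∀ η ∈ A, σ ⊆ η → η ⊆ insert u σ := by
        intro η hη hs
        by_cases hu : u ∈ η
        · have h1 : η.erase u ∈ A := by
            rw [hsym _ (Finset.notMem_erase u η), Finset.insert_erase hu]; exact hη
          have h2 := hcof _ h1 (Finset.subset_erase.2 ⟨hs, huσ⟩) (Finset.notMem_erase u η)
          rw [← h2, Finset.insert_erase hu]
        · rw [hcof η hη hs hu]; exact Finset.subset_insert _ _
      refine Clear.step (A' := ((A.filter fun η => ¬ σ ⊆ η : Finset (Finset V)) :
        Set (Finset V))) ⟨σ, hσA, insert u σ, (hsym σ huσ).1 hσA, Finset.ssubset_insert huσ,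
          hk, hcof2, ?_⟩ (ih _ ?_ ?_)
      · ext η; simp
      · have : (A.filter fun η => ¬ σ ⊆ η) ⊂ A := by
          refine Finset.filter_ssubset.2 ⟨σ, hσA, by simp⟩
        have := Finset.card_lt_card this
        omega
      · intro η hu
        simp only [Finset.mem_filter]
        rw [hsym η hu, Finset.subset_insert_iff_of_notMem huσ]
    · apply Clear.base
      intro σ hσ
      have hno : ∀ η ∈ A, u ∉ η → η.card < k := by
        intro η hη hu
        by_contra hc
        exact hne ⟨η, by simp [hη, hu]; omega⟩
      by_cases hu : u ∈ σ
      · have h1 : σ.erase u ∈ A := by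
          rw [hsym _ (Finset.notMem_erase u σ), Finset.insert_erase hu]; exact hσ
        have := hno _ h1 (Finset.notMem_erase u σ)
        rw [Finset.card_erase_of_mem hu] at this
        omega
      · exact (hno σ hσ hu).le

/-! ### Clique complexes on few vertices -/

def Cl (r : V → V → Prop) (N : Finset V) : Set (Finset V) :=
  {σ | σ ⊆ N ∧ ∀ a ∈ σ, ∀ b ∈ σ, a ≠ b → r a b}

theorem Cl_clear (r : V → V → Prop) (hr : ∀ a b, r a b → r b a) (n : ℕ) :
    ∀ (k : ℕ) (N : Finset V), N.card ≤ n → N.card ≤ 2 * k + 1 → Clear k (Cl r N) := by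
  classical
  induction n with
  | zero =>
    intro k N h0 _
    have : N = ∅ := by simpa using h0
    subst this
    refine Clear.base ?_
    rintro σ ⟨h, _⟩
    have := Finset.card_le_card h
    simp at this
    simp [this]
  | succ n ih =>
    intro k N hn hk
    by_cases hfull : ∀ a ∈ N, ∀ b ∈ N, a ≠ b → r a b
    · rcases N.eq_empty_or_nonempty with rfl | ⟨u, hu⟩
      · exact ih k _ (by simp) (by simp)
      · have : Cl r N = (N.powerset : Set (Finset V)) := by
          ext σ
          simp only [Cl, Set.mem_setOf_eq, Finset.mem_coe, Finset.mem_powerset]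
          exact ⟨fun h => h.1, fun h => ⟨h, fun a ha b hb => hfull a (h ha) b (h hb)⟩⟩
        rw [this]
        refine Clear.cone k u _ _ le_rfl ?_
        intro σ _
        simp [Finset.insert_subset_iff, hu]
    · push Not at hfull
      obtain ⟨u, hu, w, hw, huw, hnr⟩ := hfull
      have hsub : N.filter (fun x => x ≠ u ∧ r u x) ⊆ (N.erase u).erase w := by
        intro x hx
        simp only [Finset.mem_filter, Finset.mem_erase] at hx ⊢
        refine ⟨?_, hx.2.1, hx.1⟩
        rintro rfl
        exact hnr hx.2.2
      have hc1 : (N.erase u).card = N.card - 1 := Finset.card_erase_of_mem hu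
      have hw' : w ∈ N.erase u := by simp [hw, huw.symm]
      have hc2 : ((N.erase u).erase w).card = (N.erase u).card - 1 :=
        Finset.card_erase_of_mem hw'
      have hc3 := Finset.card_le_card hsub
      have hpos : 0 < (N.erase u).card := Finset.card_pos.2 ⟨w, hw'⟩
      obtain ⟨j, rfl⟩ : ∃ j, k = j + 1 := ⟨k - 1, by omega⟩
      have hlink := ih j (N.filter (fun x => x ≠ u ∧ r u x)) (by omega) (by omega)
      have hdel := ih (j + 1) (N.erase u) (by omega) (by omega)
      have hstar := Clear.shift (u := u) (by
        rintro σ ⟨h, _⟩ hm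
        have := h hm
        simp at this) hlink
      have hmem : ∀ σ, σ ∈ (fun σ => insert u σ) '' (Cl r (N.filter (fun x => x ≠ u ∧ r u x)))
          ↔ σ ∈ Cl r N ∧ u ∈ σ := by
        intro σ
        constructor
        · rintro ⟨σ, ⟨h1, h2⟩, rfl⟩
          refine ⟨⟨?_, ?_⟩, Finset.mem_insert_self _ _⟩
          · intro x hx
            rcases Finset.mem_insert.1 hx with rfl | hx
            · exact hu
            · exact (Finset.mem_filter.1 (h1 hx)).1
          · intro a ha b hb hab
            rcases Finset.mem_insert.1 ha with rfl | ha'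
            · rcases Finset.mem_insert.1 hb with rfl | hb
              · exact absurd rfl hab
              · exact (Finset.mem_filter.1 (h1 hb)).2.2
            · rcases Finset.mem_insert.1 hb with rfl | hb
              · exact hr _ _ (Finset.mem_filter.1 (h1 ha')).2.2
              · exact h2 a ha' b hb hab
        · rintro ⟨⟨h1, h2⟩, hm⟩
          refine ⟨σ.erase u, ⟨?_, ?_⟩, Finset.insert_erase hm⟩
          · intro x hx
            obtain ⟨hx1, hx2⟩ := Finset.mem_erase.1 hx
            exact Finset.mem_filter.2 ⟨h1 hx2, hx1, h2 u hm x hx2 hx1.symm⟩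
          · intro a ha b hb hab
            exact h2 a (Finset.mem_of_mem_erase ha) b (Finset.mem_of_mem_erase hb) hab
      refine Clear.glue (fun σ hσ => ((hmem σ).1 hσ).1) ?_ hstar ?_
      · intro η hη σ hσ _ hs
        exact (hmem η).2 ⟨hη, hs ((hmem σ).1 hσ).2⟩
      · convert hdel using 1
        ext σ
        rw [Set.mem_diff, hmem]
        constructor
        · rintro ⟨h, h'⟩
          have hm : u ∉ σ := fun hm => h' ⟨h, hm⟩
          exact ⟨Finset.subset_erase.2 ⟨h.1, hm⟩, h.2⟩
        · rintro ⟨h1, h2⟩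
          obtain ⟨h3, h4⟩ := Finset.subset_erase.1 h1
          exact ⟨⟨h3, h2⟩, fun h => h4 h.2⟩

/-! ### The upper part generated by a family of `m`-element faces -/

def Adj1 (m : ℕ) (F G : Finset V) : Prop := (F ∩ G).card + 1 = m

/-- Any two `m`-subsets of `η` are connected by single swaps. -/
theorem swap_conn {m : ℕ} {η : Finset V} (P : Finset V → Prop)
    (hP : ∀ F G, P F → F ⊆ η → F.card = m → G ⊆ η → G.card = m → Adj1 m F G → P G) (n : ℕ) :
    ∀ F G : Finset V, (G \ F).card = n → F ⊆ η → F.card = m → G ⊆ η → G.card = m → P F → P G := by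
  induction n with
  | zero =>
    intro F G h hF hFc hG hGc hPF
    have : G ⊆ F := by simpa [Finset.sdiff_eq_empty_iff_subset] using h
    rw [Finset.eq_of_subset_of_card_le this (by omega)]
    exact hPF
  | succ n ih =>
    intro F G h hF hFc hG hGc hPF
    obtain ⟨x, hx⟩ : (G \ F).Nonempty := by rw [← Finset.card_pos]; omega
    have h' : (F \ G).card = n + 1 := by
      have h1 := Finset.card_sdiff_add_card_inter F G
      have h2 := Finset.card_sdiff_add_card_inter G F
      rw [Finset.inter_comm] at h2
      omega
    obtain ⟨y, hy⟩ : (F \ G).Nonempty := by rw [← Finset.card_pos]; omega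
    rw [Finset.mem_sdiff] at hx hy
    have hxe : x ∉ F.erase y := fun h => hx.2 (Finset.mem_of_mem_erase h)
    have hce := Finset.card_erase_add_one hy.1
    have hcF : (insert x (F.erase y)).card = m := by
      rw [Finset.card_insert_of_notMem hxe]; omega
    have hsub : insert x (F.erase y) ⊆ η :=
      Finset.insert_subset (hG hx.1) ((Finset.erase_subset _ _).trans hF)
    refine ih (insert x (F.erase y)) G ?_ hsub hcF hG hGc (hP F _ hPF hF hFc hsub hcF ?_)
    · have : G \ insert x (F.erase y) = (G \ F).erase x := by
        ext z
        simp only [Finset.mem_sdiff, Finset.mem_insert, Finset.mem_erase]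
        constructor
        · rintro ⟨h1, h2⟩
          refine ⟨fun h => h2 (Or.inl h), h1, fun h => h2 (Or.inr ⟨?_, h⟩)⟩
          rintro rfl
          exact hy.2 h1
        · rintro ⟨h1, h2, h3⟩
          exact ⟨h2, fun h => h.elim h1 (fun h => h3 h.2)⟩
      rw [this, Finset.card_erase_of_mem (Finset.mem_sdiff.2 hx)]
      omega
    · have : F ∩ insert x (F.erase y) = F.erase y := by
        ext z
        simp only [Finset.mem_inter, Finset.mem_insert, Finset.mem_erase]
        constructor
        · rintro ⟨h1, rfl | h2⟩
          · exact absurd h1 hx.2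
          · exact h2
        · rintro ⟨h1, h2⟩
          exact ⟨h2, Or.inr ⟨h1, h2⟩⟩
      unfold Adj1
      rw [this]; omega

/-- The faces of `X` of cardinality at least `k+1` belonging to the family `C` of
`(k+2)`-faces. -/
def Up (X : Set (Finset V)) (k : ℕ) (C : Finset (Finset V)) : Set (Finset V) :=
  {σ | σ ∈ X ∧ k + 1 ≤ σ.card ∧ (∃ ρ ∈ C, ρ ⊆ σ ∨ σ ⊆ ρ) ∧
    ∀ ρ : Finset V, ρ ⊆ σ → ρ.card = k + 2 → ρ ∈ C}

theorem Up_up {X : Set (Finset V)} {k : ℕ} {C : Finset (Finset V)}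
    (hC : ∀ F ∈ C, F.card = k + 2) {η σ : Finset V} (hη : η ∈ X) (hηc : k + 2 ≤ η.card)
    (hcl : ∀ F ∈ C, ∀ G : Finset V, G ⊆ η → G.card = k + 2 → Adj1 (k + 2) F G → G ∈ C)
    (hσ : σ ∈ Up X k C) (hs : σ ⊆ η) : η ∈ Up X k C := by
  obtain ⟨_, hσc, ⟨ρ, hρC, hρ⟩, hall⟩ := hσ
  obtain ⟨F, hFC, hFη⟩ : ∃ F ∈ C, F ⊆ η := by
    by_cases hc : k + 2 ≤ σ.card
    · obtain ⟨F, hF, hFc⟩ := Finset.exists_subset_card_eq hc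
      exact ⟨F, hall F hF hFc, hF.trans hs⟩
    · have hρc := hC ρ hρC
      have hσρ : σ ⊆ ρ := by
        rcases hρ with h | h
        · have := Finset.card_le_card h; omega
        · exact h
      obtain ⟨F, hσF, hFη, hFc⟩ := Finset.exists_subsuperset_card_eq hs (by omega) hηc
      refine ⟨F, ?_, hFη⟩
      by_cases hEq : ρ = F
      · exact hEq ▸ hρC
      refine hcl ρ hρC F hFη hFc ?_
      have h1 : σ.card ≤ (ρ ∩ F).card := Finset.card_le_card (Finset.subset_inter hσρ hσF)
      have h2 : (ρ ∩ F).card < k + 2 := by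
        by_contra hcon
        have h3 : ρ ∩ F = ρ := Finset.eq_of_subset_of_card_le Finset.inter_subset_left (by omega)
        have h4 : ρ ∩ F = F := Finset.eq_of_subset_of_card_le Finset.inter_subset_right (by omega)
        exact hEq (h3.symm.trans h4)
      unfold Adj1
      omega
  refine ⟨hη, by omega, ⟨F, hFC, Or.inl hFη⟩, ?_⟩
  intro G hG hGc
  exact swap_conn (m := k + 2) (η := η) (fun F => F ∈ C)
    (fun F G hF _ _ hG hGc hadj => hcl F hF G hG hGc hadj) _ F G rfl hFη (hC F hFC) hG hGc hFC

theorem Up_down {X : Set (Finset V)} {k : ℕ} {C : Finset (Finset V)} (hX : IsComplex X)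
    {η σ : Finset V} (hη : η ∈ Up X k C) (hηc : k + 2 ≤ η.card) (hs : σ ⊆ η)
    (hσ : k + 1 ≤ σ.card) : σ ∈ Up X k C := by
  obtain ⟨h1, h2, h3, h4⟩ := hη
  refine ⟨hX.2 η h1 σ hs (Finset.card_pos.1 (by omega)), hσ, ?_,
    fun ρ hρ hc => h4 ρ (hρ.trans hs) hc⟩
  by_cases hc : k + 2 ≤ σ.card
  · obtain ⟨F, hF, hFc⟩ := Finset.exists_subset_card_eq hc
    exact ⟨F, h4 F (hF.trans hs) hFc, Or.inl hF⟩
  · obtain ⟨F, hσF, hFη, hFc⟩ := Finset.exists_subsuperset_card_eq hs (by omega) hηc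
    exact ⟨F, h4 F hFη hFc, Or.inr hσF⟩

theorem Up_mem {X : Set (Finset V)} {k : ℕ} {C : Finset (Finset V)} {F : Finset V}
    (hX : F ∈ X) (hc : F.card = k + 2) (hF : F ∈ C) : F ∈ Up X k C :=
  ⟨hX, by omega, ⟨F, hF, Or.inl subset_rfl⟩, fun ρ hρ hρc => by
    rw [Finset.eq_of_subset_of_card_le hρ (by omega)]; exact hF⟩

theorem Up_mono {X : Set (Finset V)} {k : ℕ} {C D : Finset (Finset V)} (h : C ⊆ D) :
    Up X k C ⊆ Up X k D := by
  rintro σ ⟨h1, h2, ⟨ρ, hρ, h3⟩, h4⟩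
  exact ⟨h1, h2, ⟨ρ, h hρ, h3⟩, fun ρ hρ hc => h (h4 ρ hρ hc)⟩

theorem Adj1.symm {m : ℕ} {F G : Finset V} (h : Adj1 m F G) : Adj1 m G F := by
  unfold Adj1 at *
  rwa [Finset.inter_comm]

/-- Splitting off an adjacency-closed part. -/
theorem Up_split {X : Set (Finset V)} {k : ℕ} {C C1 : Finset (Finset V)}
    (hC : ∀ F ∈ C, F ∈ X ∧ F.card = k + 2) (hsub : C1 ⊆ C)
    (hcl : ∀ F ∈ C1, ∀ G ∈ C, Adj1 (k + 2) F G → G ∈ C1)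
    (h1 : Clear (k + 1) (Up X k C1)) (h2 : Clear (k + 1) (Up X k (C \ C1))) :
    Clear (k + 1) (Up X k C) := by
  have hup : ∀ η ∈ Up X k C, k + 2 ≤ η.card → ∀ σ ∈ Up X k C1, σ ⊆ η → η ∈ Up X k C1 := by
    intro η hη hc σ hσ hs
    exact Up_up (fun F hF => (hC F (hsub hF)).2) hη.1 hc
      (fun F hF G hG hGc hadj => hcl F hF G (hη.2.2.2 G hG hGc) hadj) hσ hs
  have hup2 : ∀ η ∈ Up X k C, k + 2 ≤ η.card → ∀ σ ∈ Up X k (C \ C1), σ ⊆ η →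
      η ∈ Up X k (C \ C1) := by
    intro η hη hc σ hσ hs
    refine Up_up (fun F hF => (hC F (Finset.mem_sdiff.1 hF).1).2) hη.1 hc
      (fun F hF G hG hGc hadj => ?_) hσ hs
    rw [Finset.mem_sdiff] at hF ⊢
    exact ⟨hη.2.2.2 G hG hGc, fun hG1 => hF.2 (hcl G hG1 F hF.1 hadj.symm)⟩
  refine Clear.glue (Up_mono hsub) ?_ h1 (Clear.extend (A := Up X k (C \ C1)) ?_ ?_ h2)
  · intro η hη σ hσ hk hs
    by_cases hc : k + 2 ≤ η.card
    · exact hup η hη hc σ hσ hs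
    · rw [← Finset.eq_of_subset_of_card_le hs (by omega)]; exact hσ
  · intro σ hσ
    refine ⟨Up_mono Finset.sdiff_subset hσ, fun hσ1 => ?_⟩
    obtain ⟨_, _, ⟨ρ, hρ, hor⟩, _⟩ := hσ
    rw [Finset.mem_sdiff] at hρ
    have hρX := hC ρ hρ.1
    refine hρ.2 ?_
    rcases hor with h | h
    · exact hσ1.2.2.2 ρ h hρX.2
    · exact (hup ρ (Up_mem hρX.1 hρX.2 hρ.1) (by omega) σ hσ1 h).2.2.2 ρ subset_rfl hρX.2
  · rintro σ ⟨hσ, hσ1⟩ hσ2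
    by_contra hc
    obtain ⟨F, hF, hFc⟩ := Finset.exists_subset_card_eq (show k + 2 ≤ σ.card by omega)
    have hFC := hσ.2.2.2 F hF hFc
    have hFX := hC F hFC
    by_cases hF1 : F ∈ C1
    · exact hσ1 (hup σ hσ (by omega) F (Up_mem hFX.1 hFX.2 hF1) hF)
    · exact hσ2 (hup2 σ hσ (by omega) F
        (Up_mem hFX.1 hFX.2 (Finset.mem_sdiff.2 ⟨hFC, hF1⟩)) hF)

/-- `C` is closed under adjacency within the subcomplex induced on its support. -/
def SuppClosed (X : Set (Finset V)) (k : ℕ) (C : Finset (Finset V)) : Prop :=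
  ∀ F ∈ C, ∀ G ∈ X, G.card = k + 2 → Adj1 (k + 2) F G → (∀ x ∈ G, ∃ H ∈ C, x ∈ H) → G ∈ C

/-- Removing a vertex of small degree. -/
theorem Up_vertex {X : Set (Finset V)} {k : ℕ} {C : Finset (Finset V)} (hX : IsCliqueComplex X)
    (hC : ∀ F ∈ C, F ∈ X ∧ F.card = k + 2) (hcl : SuppClosed X k C) (v : V) (hv : ∃ F ∈ C, v ∈ F)
    (N : Finset V) (hN : ∀ w, w ∈ N ↔ w ≠ v ∧ ∃ F ∈ C, v ∈ F ∧ w ∈ F) (hNc : N.card ≤ 2 * k + 1)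
    (h1 : Clear (k + 1) (Up X k (C.filter fun F => v ∉ F))) : Clear (k + 1) (Up X k C) := by
  have hCl := Cl_clear (fun a b => ({a, b} : Finset V) ∈ X)
    (fun a b h => by rwa [Finset.pair_comm]) _ k N le_rfl hNc
  have hpair : ∀ w ∈ N, ({v, w} : Finset V) ∈ X := by
    intro w hw
    obtain ⟨_, F, hF, hvF, hwF⟩ := (hN w).1 hw
    exact hX.1.2 F (hC F hF).1 _ (by simp [Finset.insert_subset_iff, hvF, hwF]) (by simp)
  have hvN : v ∉ N := fun h => ((hN v).1 h).1 rfl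
  have hsing : ∀ w ∈ insert v N, ({w} : Finset V) ∈ X := by
    intro w hw
    rcases Finset.mem_insert.1 hw with rfl | hw
    · obtain ⟨F, hF, hvF⟩ := hv
      exact hX.1.2 F (hC F hF).1 _ (by simpa using hvF) (by simp)
    · exact hX.1.2 _ (hpair w hw) _ (by simp) (by simp)
  have hinX : ∀ τ ∈ Cl (fun a b => ({a, b} : Finset V) ∈ X) N, insert v τ ∈ X := by
    rintro τ ⟨hτ1, hτ2⟩
    refine hX.2 _ (by simp) ?_
    intro ρ hρ hne hc
    have hpos := Finset.card_pos.2 hne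
    have hsub : ρ ⊆ insert v N := hρ.trans (Finset.insert_subset_insert _ hτ1)
    obtain h | h : ρ.card = 1 ∨ ρ.card = 2 := by omega
    · obtain ⟨a, rfl⟩ := Finset.card_eq_one.1 h
      exact hsing a (hsub (by simp))
    · obtain ⟨a, b, hab, rfl⟩ := Finset.card_eq_two.1 h
      have ha := hρ (show a ∈ ({a, b} : Finset V) by simp)
      have hb := hρ (show b ∈ ({a, b} : Finset V) by simp)
      rcases Finset.mem_insert.1 ha with rfl | ha'
      · rcases Finset.mem_insert.1 hb with rfl | hb
        · exact absurd rfl hab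
        · exact hpair b (hτ1 hb)
      · rcases Finset.mem_insert.1 hb with rfl | hb
        · rw [Finset.pair_comm]; exact hpair a (hτ1 ha')
        · exact hτ2 a ha' b hb hab
  -- every member of `Up` containing `v` lies in the closed neighbourhood of `v`
  have hnbr : ∀ σ ∈ Up X k C, v ∈ σ → σ ⊆ insert v N := by
    rintro σ ⟨hσX, hσc, ⟨ρ, hρ, hor⟩, hall⟩ hvσ w hw
    by_cases hwv : w = v
    · simp [hwv]
    refine Finset.mem_insert_of_mem ((hN w).2 ⟨hwv, ?_⟩)
    by_cases hc : k + 2 ≤ σ.card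
    · have hs : ({v, w} : Finset V) ⊆ σ := by simp [Finset.insert_subset_iff, hvσ, hw]
      obtain ⟨F, hF1, hF2, hF3⟩ := Finset.exists_subsuperset_card_eq hs
        (Finset.card_le_two.trans (by omega)) hc
      exact ⟨F, hall F hF2 hF3, hF1 (by simp), hF1 (by simp)⟩
    · have hρc := (hC ρ hρ).2
      rcases hor with h | h
      · have := Finset.card_le_card h; omega
      · exact ⟨ρ, hρ, h hvσ, h hw⟩
  have hsupp : ∀ x ∈ insert v N, ∃ H ∈ C, x ∈ H := by
    intro x hx
    rcases Finset.mem_insert.1 hx with rfl | hx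
    · exact hv
    · obtain ⟨_, F, hF, _, h⟩ := (hN x).1 hx
      exact ⟨F, hF, h⟩
  have hM : Clear k {σ : Finset V | v ∉ σ ∧ insert v σ ∈ Up X k C} := by
    refine Clear.restrict ?_ ?_ hCl
    · rintro σ ⟨hvσ, hσ⟩
      have hsub := hnbr _ hσ (by simp)
      refine ⟨?_, ?_⟩
      · intro w hw
        rcases Finset.mem_insert.1 (hsub (Finset.mem_insert_of_mem hw)) with rfl | h
        · exact absurd hw hvσ
        · exact h
      · intro a ha b hb _
        exact hX.1.2 _ hσ.1 _ (by simp [Finset.insert_subset_iff, ha, hb]) (by simp)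
    · intro σ hσ τ hτ hlt hk
      have hvσ : v ∉ σ := fun h => hvN (hσ.1 h)
      have hvτ : v ∉ τ := fun h => hvN (hτ.1 h)
      have hct := Finset.card_lt_card hlt
      have hcσ := Finset.card_insert_of_notMem hvσ
      have hcτ := Finset.card_insert_of_notMem hvτ
      constructor
      · rintro ⟨_, h⟩
        refine ⟨hvτ, Up_up (fun F hF => (hC F hF).2) (hinX τ hτ) (by omega) ?_ h
          (Finset.insert_subset_insert _ hlt.1)⟩
        intro F hF G hG hGc hadj
        refine hcl F hF G (hX.1.2 _ (hinX τ hτ) G hG (Finset.card_pos.1 (by omega))) hGc hadj ?_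
        intro x hx
        exact hsupp x (Finset.insert_subset_insert _ hτ.1 (hG hx))
      · rintro ⟨_, h⟩
        exact ⟨hvσ, Up_down hX.1 h (by omega) (Finset.insert_subset_insert _ hlt.1) (by omega)⟩
  have hstar := Clear.shift (u := v) (fun σ hσ => hσ.1) hM
  have hmem : ∀ σ, σ ∈ (fun σ => insert v σ) '' {σ : Finset V | v ∉ σ ∧ insert v σ ∈ Up X k C} ↔
      σ ∈ Up X k C ∧ v ∈ σ := by
    intro σ
    constructor
    · rintro ⟨σ, hσ, rfl⟩
      exact ⟨hσ.2, Finset.mem_insert_self _ _⟩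
    · rintro ⟨h, hvσ⟩
      refine ⟨σ.erase v, ⟨Finset.notMem_erase _ _, ?_⟩, Finset.insert_erase hvσ⟩
      rwa [Finset.insert_erase hvσ]
  refine Clear.glue (fun σ hσ => ((hmem σ).1 hσ).1) ?_ hstar (Clear.extend ?_ ?_ h1)
  · intro η hη σ hσ _ hs
    exact (hmem η).2 ⟨hη, hs ((hmem σ).1 hσ).2⟩
  · intro σ hσ
    refine ⟨Up_mono (Finset.filter_subset _ _) hσ, fun h => ?_⟩
    have hvσ := ((hmem σ).1 h).2
    obtain ⟨_, hσc, ⟨ρ, hρ, hor⟩, hall⟩ := hσ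
    rw [Finset.mem_filter] at hρ
    have hρc := (hC ρ hρ.1).2
    rcases hor with h | h
    · have hle := Finset.card_le_card h
      obtain ⟨F, hF1, hF2, hF3⟩ := Finset.exists_subsuperset_card_eq
        (Finset.singleton_subset_iff.2 hvσ) (by simp : ({v} : Finset V).card ≤ k + 2) (by omega)
      exact (Finset.mem_filter.1 (hall F hF2 hF3)).2 (hF1 (by simp))
    · exact hρ.2 (h hvσ)
  · rintro σ ⟨hσ, hσ1⟩ hσ2
    by_contra hc
    have hvσ : v ∉ σ := fun h => hσ1 ((hmem σ).2 ⟨hσ, h⟩)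
    have hall : ∀ ρ : Finset V, ρ ⊆ σ → ρ.card = k + 2 → ρ ∈ C.filter fun F => v ∉ F :=
      fun ρ hρ hρc => Finset.mem_filter.2 ⟨hσ.2.2.2 ρ hρ hρc, fun h => hvσ (hρ h)⟩
    obtain ⟨F, hF, hFc⟩ := Finset.exists_subset_card_eq (show k + 2 ≤ σ.card by omega)
    exact hσ2 ⟨hσ.1, hσ.2.1, ⟨F, hall F hF hFc, Or.inl hF⟩, hall⟩

theorem Up_clear {X : Set (Finset V)} {k : ℕ} (hX : IsCliqueComplex X)
    (hdeg : ∀ S : Set (Finset V), S ⊆ X → IsComplex S → IsPure S (k + 1) →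
      StronglyConnected S (k + 1) →
      ∃ v : V, ({v} : Finset V) ∈ S ∧ degreeIn S v ≤ 2 * k + 1) (n : ℕ) :
    ∀ C : Finset (Finset V), C.card ≤ n → (∀ F ∈ C, F ∈ X ∧ F.card = k + 2) →
      SuppClosed X k C → Clear (k + 1) (Up X k C) := by
  classical
  induction n with
  | zero =>
    intro C h0 _ _
    have : C = ∅ := by simpa using h0
    subst this
    refine Clear.base ?_
    rintro σ ⟨_, _, ⟨ρ, hρ, _⟩, _⟩
    simp at hρ
  | succ n ih =>
    intro C hn hC hcl
    rcases C.eq_empty_or_nonempty with rfl | ⟨F0, hF0⟩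
    · exact ih _ (by simp) hC hcl
    let R : Finset V → Finset V → Prop := fun F G => F ∈ C ∧ G ∈ C ∧ Adj1 (k + 2) F G
    let C1 := C.filter fun G => Relation.ReflTransGen R F0 G
    have hsub : C1 ⊆ C := Finset.filter_subset _ _
    have hF01 : F0 ∈ C1 := Finset.mem_filter.2 ⟨hF0, Relation.ReflTransGen.refl⟩
    have hcl1 : ∀ F ∈ C1, ∀ G ∈ C, Adj1 (k + 2) F G → G ∈ C1 := by
      intro F hF G hG hadj
      obtain ⟨hFC, hFr⟩ := Finset.mem_filter.1 hF
      exact Finset.mem_filter.2 ⟨hG, hFr.tail ⟨hFC, hG, hadj⟩⟩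
    by_cases hall : C1 = C
    · -- connected case
      let S : Set (Finset V) := {σ | σ.Nonempty ∧ ∃ F ∈ C, σ ⊆ F}
      have hFS : ∀ F ∈ C, F ∈ S := fun F hF =>
        ⟨Finset.card_pos.1 (by have := (hC F hF).2; omega), F, hF, subset_rfl⟩
      have hSC : ∀ σ ∈ S, σ.card = k + 1 + 1 → σ ∈ C := by
        rintro σ ⟨_, F, hF, hs⟩ hc
        have := (hC F hF).2
        rw [Finset.eq_of_subset_of_card_le hs (by omega)]
        exact hF
      have hsymm : Std.Symm R := ⟨fun F G h => ⟨h.2.1, h.1, h.2.2.symm⟩⟩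
      obtain ⟨v, hvS, hvd⟩ := hdeg S
        (by rintro σ ⟨hne, F, hF, hs⟩; exact hX.1.2 F (hC F hF).1 σ hs hne)
        ⟨fun σ hσ => hσ.1, by
          rintro σ ⟨_, F, hF, hs⟩ τ hτ hne
          exact ⟨hne, F, hF, hτ.trans hs⟩⟩
        ⟨⟨F0, hFS F0 hF0⟩, by
          rintro τ ⟨⟨_, F, hF, hs⟩, hmax⟩
          rw [← hmax F (hFS F hF) hs]
          exact (hC F hF).2⟩
        (by
          intro σ hσ τ hτ hσc hτc
          have hσC := hSC σ hσ hσc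
          have hτC := hSC τ hτ hτc
          rw [← hall] at hσC hτC
          have h1 := (Finset.mem_filter.1 hσC).2
          have h2 := (Finset.mem_filter.1 hτC).2
          have h3 := (Relation.ReflTransGen.stdSymm.symm _ _ h1).trans h2
          refine Relation.ReflTransGen.mono (r := R) ?_ _ _ h3
          rintro F G ⟨hF, hG, hadj⟩
          refine ⟨hFS F hF, hFS G hG, (hC F hF).2, (hC G hG).2, ?_⟩
          unfold Adj1 at hadj
          omega)
      obtain ⟨_, Fv, hFv, hvs⟩ := hvS
      have hvFv : v ∈ Fv := hvs (by simp)
      let N : Finset V := (C.biUnion id).filter fun w => w ≠ v ∧ ∃ F ∈ C, v ∈ F ∧ w ∈ F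
      have hN : ∀ w, w ∈ N ↔ w ≠ v ∧ ∃ F ∈ C, v ∈ F ∧ w ∈ F := by
        intro w
        simp only [N, Finset.mem_filter, Finset.mem_biUnion, id]
        constructor
        · exact fun h => h.2
        · rintro ⟨h, F, hF, h1, h2⟩
          exact ⟨⟨F, hF, h2⟩, h, F, hF, h1, h2⟩
      have hNc : N.card ≤ 2 * k + 1 := by
        rw [← Set.ncard_coe_finset]
        refine le_trans (le_of_eq ?_) hvd
        unfold degreeIn
        congr 1
        ext w
        rw [Finset.mem_coe, hN]
        simp [S, Finset.insert_subset_iff]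
      refine Up_vertex hX hC hcl v ⟨Fv, hFv, hvFv⟩ N hN hNc (ih _ ?_ ?_ ?_)
      · have : (C.filter fun F => v ∉ F) ⊂ C :=
          Finset.filter_ssubset.2 ⟨Fv, hFv, by simpa using hvFv⟩
        have := Finset.card_lt_card this
        omega
      · exact fun F hF => hC F (Finset.mem_filter.1 hF).1
      · intro F hF G hG hGc hadj hsup
        refine Finset.mem_filter.2 ⟨hcl F (Finset.mem_filter.1 hF).1 G hG hGc hadj ?_, ?_⟩
        · intro x hx
          obtain ⟨H, hH, hxH⟩ := hsup x hx
          exact ⟨H, (Finset.mem_filter.1 hH).1, hxH⟩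
        · intro hvG
          obtain ⟨H, hH, hxH⟩ := hsup v hvG
          exact (Finset.mem_filter.1 hH).2 hxH
    · have hlt1 := Finset.card_lt_card (hsub.ssubset_of_ne hall)
      have hlt2 : (C \ C1).card < C.card := by
        have h1 := Finset.card_sdiff_add_card_eq_card hsub
        have h2 := Finset.card_pos.2 ⟨F0, hF01⟩
        omega
      refine Up_split hC hsub hcl1 (ih _ (by omega) (fun F hF => hC F (hsub hF)) ?_)
        (ih _ (by omega) (fun F hF => hC F (Finset.mem_sdiff.1 hF).1) ?_)
      · intro F hF G hG hGc hadj hsup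
        refine hcl1 F hF G (hcl F (hsub hF) G hG hGc hadj ?_) hadj
        intro x hx
        obtain ⟨H, hH, hxH⟩ := hsup x hx
        exact ⟨H, hsub hH, hxH⟩
      · intro F hF G hG hGc hadj hsup
        rw [Finset.mem_sdiff] at hF ⊢
        refine ⟨hcl F hF.1 G hG hGc hadj ?_, fun hG1 => hF.2 (hcl1 G hG1 F hF.1 hadj.symm)⟩
        intro x hx
        obtain ⟨H, hH, hxH⟩ := hsup x hx
        exact ⟨H, (Finset.mem_sdiff.1 hH).1, hxH⟩

theorem FStep.collapse {k : ℕ} {A A' : Set (Finset V)} (h : FStep k A A') : CollapseStep A A' := by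
  obtain ⟨σ, hσ, τ, hτ, hlt, _, hfree, rfl⟩ := h
  refine ⟨σ, τ, ⟨hσ, ⟨hτ, ?_⟩, hlt, ?_⟩, ?_⟩
  · intro η hη hs
    exact (hfree η hη (hlt.1.trans hs)).antisymm hs
  · intro η hη hs
    exact (hη.2 τ hτ (hfree η hη.1 hs)).symm
  · ext η
    simp only [Set.mem_diff, Set.mem_setOf_eq]
    constructor
    · rintro ⟨h1, h2⟩
      exact ⟨h1, fun h => h2 h.1⟩
    · rintro ⟨h1, h2⟩
      exact ⟨h1, fun h => h2 ⟨h, hfree η h1 h⟩⟩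

/-- If every strongly connected, pure `(k+1)`-dimensional subcomplex `S`
of a finite clique complex `X` contains a vertex of degree at most `2k + 1` in `S`, then
`X` is `(k+1)`-collapsible. -/
theorem cliqueComplex_collapsible_of_degree_condition {V : Type*} [DecidableEq V]
    (k : ℕ) (X : Set (Finset V)) (hX : IsCliqueComplex X) (hfin : X.Finite)
    (hdeg : ∀ S : Set (Finset V), S ⊆ X → IsComplex S → IsPure S (k + 1) →
      StronglyConnected S (k + 1) →
      ∃ v : V, ({v} : Finset V) ∈ S ∧ degreeIn S v ≤ 2 * k + 1) :
    Collapsible (k + 1) X := by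
  classical
  let C : Finset (Finset V) := hfin.toFinset.filter fun F => F.card = k + 2
  have hmem : ∀ F, F ∈ C ↔ F ∈ X ∧ F.card = k + 2 := by
    intro F
    simp [C]
  have hU := Up_clear hX hdeg _ C le_rfl (fun F hF => (hmem F).1 hF)
    (fun F _ G hG hGc _ _ => (hmem G).2 ⟨hG, hGc⟩)
  have hXc : Clear (k + 1) X := by
    refine Clear.extend (fun σ hσ => hσ.1) ?_ hU
    intro η hη hn
    by_contra hc
    obtain ⟨F, hF, hFc⟩ := Finset.exists_subset_card_eq (show k + 2 ≤ η.card by omega)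
    have hall : ∀ ρ : Finset V, ρ ⊆ η → ρ.card = k + 2 → ρ ∈ C := fun ρ hρ hρc =>
      (hmem ρ).2 ⟨hX.1.2 η hη ρ hρ (Finset.card_pos.1 (by omega)), hρc⟩
    exact hn ⟨hη, by omega, ⟨F, hall F hF hFc, Or.inl hF⟩, hall⟩
  obtain ⟨K', hK', hc⟩ := hXc
  exact ⟨K', Relation.ReflTransGen.mono (r := FStep (k + 1)) (fun _ _ h => FStep.collapse h) _ _ hK', hc⟩
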